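/- Let D be an ultrafilter on a set J and let Z' = ⟨S', P', C', I'⟩ be the ultrapower of Z with respect to D. Then every member X of the term algebra of Z' splits only finitely many pairs (x,y) of distinct elements of I'. -/

import Mathlib

open FirstOrder FirstOrder.Language

/-- Relation symbols of the language of atom structures: a unary `I`,
a binary `C` and a ternary `P`. -/
inductive AtomRel : ℕ → Type
  | I : AtomRel 1
  | C : AtomRel 2
  | P : AtomRel 3

/-- The first-order language with one ternary relation symbol `P`, one binary
relation symbol `C` and one unary relation symbol `I`. -/
def atomLang : FirstOrder.Language :=
  ⟨fun _ => Empty, AtomRel⟩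

/-- Function symbols of the language of the term algebras: a constant `1'`,
unary symbols `−` (complement) and `⁻` (converse), binary symbols `+` and `;`. -/
inductive AlgFun : ℕ → Type
  | one : AlgFun 0
  | compl : AlgFun 1
  | conv : AlgFun 1
  | add : AlgFun 2
  | comp : AlgFun 2

/-- The first-order language with binary operations `+` and `;`, unary
operations `−` and `⁻`, and a constant `1'`. -/
def algLang : FirstOrder.Language :=
  ⟨AlgFun, fun _ => Empty⟩

section Generic

variable {M : Type} [atomLang.Structure M]

/-- The interpretation of the unary relation symbol `I`. -/
def mI (a : M) : Prop := Structure.RelMap (L := atomLang) (AtomRel.I : atomLang.Relations 1) ![a]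

/-- The interpretation of the binary relation symbol `C`. -/
def mC (a b : M) : Prop := Structure.RelMap (L := atomLang) (AtomRel.C : atomLang.Relations 2) ![a, b]

/-- The interpretation of the ternary relation symbol `P`. -/
def mP (a b c : M) : Prop := Structure.RelMap (L := atomLang) (AtomRel.P : atomLang.Relations 3) ![a, b, c]

/-- `X ; Y = {u : ∃ x ∈ X, y ∈ Y, P(x,y,u)}`. -/
def sComp (X Y : Set M) : Set M := {u | ∃ x ∈ X, ∃ y ∈ Y, mP x y u}

/-- `X⁻ = {u : ∃ x ∈ X, C(x,u)}`. -/
def sConv (X : Set M) : Set M := {u | ∃ x ∈ X, mC x u}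

/-- The set of elements satisfying `I`. -/
def idSet (M : Type) [atomLang.Structure M] : Set M := {a | mI a}

end Generic

/-- Membership in the term algebra: the smallest collection of subsets of `M`
containing all singletons and the set `I`, closed under binary union,
complementation, `;` and `⁻`. -/
inductive InTA (M : Type) [atomLang.Structure M] : Set M → Prop
  | sing (a : M) : InTA M {a}
  | idset : InTA M (idSet M)
  | union {X Y : Set M} : InTA M X → InTA M Y → InTA M (X ∪ Y)
  | compl {X : Set M} : InTA M X → InTA M Xᶜ
  | comp {X Y : Set M} : InTA M X → InTA M Y → InTA M (sComp X Y)
  | conv {X : Set M} : InTA M X → InTA M (sConv X)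

/-- The term algebra of an atom structure, as a type. -/
def TermAlg (M : Type) [atomLang.Structure M] : Type := {X : Set M // InTA M X}

/-- The term algebra as a structure in the language `algLang`:
`+` is union, `−` is complement, `;` and `⁻` are the operations defined from
`P` and `C`, and `1'` is the set `I`. -/
instance termAlgStructure (M : Type) [atomLang.Structure M] :
    algLang.Structure (TermAlg M) where
  funMap := fun {_} f v =>
    match f with
    | .one => ⟨idSet M, InTA.idset⟩
    | .compl => ⟨(v 0).1ᶜ, InTA.compl (v 0).2⟩
    | .conv => ⟨sConv (v 0).1, InTA.conv (v 0).2⟩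
    | .add => ⟨(v 0).1 ∪ (v 1).1, InTA.union (v 0).2 (v 1).2⟩
    | .comp => ⟨sComp (v 0).1 (v 1).1, InTA.comp (v 0).2 (v 1).2⟩
  RelMap := fun {_} r _ => r.elim

/-- `a` goes from `x` to `y` when `P(x,a,a)` and `P(a,y,a)`. -/
def goes {M : Type} [atomLang.Structure M] (a x y : M) : Prop := mP x a a ∧ mP a y a

/-- `X` splits the pair `(x,y)` when some `a ∈ X` and some `b ∉ X` both go
from `x` to `y`. -/
def SplitsG {M : Type} [atomLang.Structure M] (X : Set M) (x y : M) : Prop :=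
  ∃ a ∈ X, ∃ b ∉ X, goes a x y ∧ goes b x y

/-- The pair `(x,y)` is splitable when `x ≠ y` and at least two distinct
elements go from `x` to `y`. -/
def SplitableG {M : Type} [atomLang.Structure M] (x y : M) : Prop :=
  x ≠ y ∧ ∃ a b : M, a ≠ b ∧ goes a x y ∧ goes b x y

/-- Converse of a binary relation, as a set of pairs. -/
def relConv {U : Type} (R : Set (U × U)) : Set (U × U) := {p | (p.2, p.1) ∈ R}

/-- Composition of binary relations, as sets of pairs. -/
def relComp {U : Type} (R T : Set (U × U)) : Set (U × U) :=
  {p | ∃ w, (p.1, w) ∈ R ∧ (w, p.2) ∈ T}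

/-- An atom structure is completely representable. -/
def CompRep (M : Type) [atomLang.Structure M] : Prop :=
  ∃ (U : Type) (rep : M → Set (U × U)),
    (∀ a : M, (rep a).Nonempty) ∧
    (∀ a b : M, a ≠ b → Disjoint (rep a) (rep b)) ∧
    (⋃ a : M, rep a) = Set.univ ∧
    (∀ a : M, (mI a ↔ rep a ⊆ Set.diagonal U) ∧
      ((rep a ⊆ Set.diagonal U) ↔ (rep a ∩ Set.diagonal U).Nonempty)) ∧
    (∀ a b : M, (mC a b ↔ rep b = relConv (rep a)) ∧
      ((rep b = relConv (rep a)) ↔ (rep b ∩ relConv (rep a)).Nonempty)) ∧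
    (∀ a b c : M, (mP a b c ↔ rep c ⊆ relComp (rep a) (rep b)) ∧
      ((rep c ⊆ relComp (rep a) (rep b)) ↔ (rep c ∩ relComp (rep a) (rep b)).Nonempty))
/-- The atoms of the atom structure `Z`: identity atoms `id n i` (`i ≤ n`),
split atoms `r n k` and their converses `rc n k` (`1 ≤ k ≤ n`), and
atoms `w n i m j` (`i ≤ n`, `j ≤ m`).  Distinct constructor applications give
pairwise distinct elements. -/
inductive Atom : Type
  | id : (n i : ℕ) → i ≤ n → Atom
  | r : (n k : ℕ) → 1 ≤ k → k ≤ n → Atom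
  | rc : (n k : ℕ) → 1 ≤ k → k ≤ n → Atom
  | w : (n i m j : ℕ) → i ≤ n → j ≤ m → Atom

/-- The domain function of `Z`. -/
def Atom.dom : Atom → Atom
  | .id n i h => .id n i h
  | .r n _ _ _ => .id n 0 (Nat.zero_le n)
  | .rc n k _ h2 => .id n k h2
  | .w n i _ _ hi _ => .id n i hi

/-- The range function of `Z`. -/
def Atom.rg : Atom → Atom
  | .id n i h => .id n i h
  | .r n k _ h2 => .id n k h2
  | .rc n _ _ _ => .id n 0 (Nat.zero_le n)
  | .w _ _ m j _ hj => .id m j hj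

/-- Membership in the set `I` of identity atoms of `Z`. -/
def Atom.isId : Atom → Prop
  | .id _ _ _ => True
  | _ => False

/-- The converse function on atoms of `Z`. -/
def Atom.cnv : Atom → Atom
  | .id n i h => .id n i h
  | .r n k h1 h2 => .rc n k h1 h2
  | .rc n k h1 h2 => .r n k h1 h2
  | .w n i m j hi hj => .w m j n i hj hi

/-- The binary relation `C` of `Z`: it consists of the pairs `(x,x)` for
`x ∈ I`, `(r n k, rc n k)`, `(rc n k, r n k)` and `(w n i m j, w m j n i)`,
i.e. exactly the pairs `(a, cnv a)`. -/
def Crel (a b : Atom) : Prop := b = Atom.cnv a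

/-- The ternary relation `P` of `Z`: the triples `(dom a, a, a)` and
`(a, rg a, a)` for `a ∈ S`, the triples `(a, b, dom a)` for `(a,b) ∈ C`, and
the triples `(a,b,c)` of non-identity atoms with `dom a = dom c`,
`rg a = dom b`, `rg b = rg c`. -/
def Prel (a b c : Atom) : Prop :=
  (a = b.dom ∧ c = b) ∨
  (b = a.rg ∧ c = a) ∨
  (Crel a b ∧ c = a.dom) ∨
  (¬ a.isId ∧ ¬ b.isId ∧ ¬ c.isId ∧ a.dom = c.dom ∧ a.rg = b.dom ∧ b.rg = c.rg)

/-- `Z` as a structure for the language `atomLang`. -/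
instance atomStructureZ : atomLang.Structure Atom where
  funMap := fun {_} f _ => f.elim
  RelMap := fun {_} r v =>
    match r with
    | AtomRel.I => (v 0).isId
    | AtomRel.C => Crel (v 0) (v 1)
    | AtomRel.P => Prel (v 0) (v 1) (v 2)

/-- `X ⊆ S` splits the pair `(x,y)` if there are `a ∈ X` and `b ∉ X` with
`dom a = dom b = x` and `rg a = rg b = y`. -/
def Splits (X : Set Atom) (x y : Atom) : Prop :=
  ∃ a ∈ X, ∃ b ∉ X, a.dom = x ∧ a.rg = y ∧ b.dom = x ∧ b.rg = y

/-- The pair `(x,y)` is splitable if `x ≠ y` and there are two distinct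
elements `a ≠ b` of `S` with `dom a = dom b = x` and `rg a = rg b = y`. -/
def Splitable (x y : Atom) : Prop :=
  x ≠ y ∧ ∃ a b : Atom, a ≠ b ∧ a.dom = x ∧ a.rg = y ∧ b.dom = x ∧ b.rg = y

/-- The ultrapower `Z'` of the atom structure `Z` with respect to an
ultrafilter `D` on `J`. -/
def UPow (J : Type) (D : Ultrafilter J) : Type :=
  (D : Filter J).Product (fun _ : J => Atom)

/-- The ultraproduct structure on the ultrapower of `Z`. -/
instance uPowStructure (J : Type) (D : Ultrafilter J) : atomLang.Structure (UPow J D) :=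
  inferInstanceAs (atomLang.Structure ((D : Filter J).Product fun _ : J => Atom))

/-!
Relative to a composition of two non-identity atoms, parallel atoms running between distinct
identities are interchangeable. Hence a pair split by `X ; Y` is already split by `X` or by `Y`:
if `u ∈ X ; Y` and `v ∉ X ; Y` are parallel, the product containing `u` has an identity factor, so
`u` is its other factor and `v` cannot replace `u` there. The remaining generators and operations
are harmless, a singleton splitting at most the pair of endpoints of its element. The conditions
that this uses are elementary and hold in `Z`, so they hold in its ultrapowers.
-/

section SplitPairs

variable {M : Type} [atomLang.Structure M]

/-- The pairs of distinct identity atoms split by `X`. -/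
def splitPairs (X : Set M) : Set (M × M) :=
  {p | mI p.1 ∧ mI p.2 ∧ p.1 ≠ p.2 ∧ SplitsG X p.1 p.2}

theorem splitPairs_union_subset (X Y : Set M) :
    splitPairs (X ∪ Y) ⊆ splitPairs X ∪ splitPairs Y := by
  rintro ⟨x, y⟩ ⟨hx, hy, hxy, a, ha, b, hb, hab⟩
  obtain ⟨hbX, hbY⟩ := not_or.1 hb
  exact ha.imp (fun haX => ⟨hx, hy, hxy, a, haX, b, hbX, hab⟩)
    (fun haY => ⟨hx, hy, hxy, a, haY, b, hbY, hab⟩)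

theorem splitPairs_compl_subset (X : Set M) : splitPairs Xᶜ ⊆ splitPairs X := by
  rintro ⟨x, y⟩ ⟨hx, hy, hxy, a, ha, b, hb, hab⟩
  exact ⟨hx, hy, hxy, b, not_not.1 hb, a, ha, hab.symm⟩

variable (M) in
/-- Atom structures whose composition is coarse: apart from the unit laws, uniqueness of the
endpoints of an atom and reversal of endpoints by converse, the condition is that whether `u` lies
in the composition of two non-identity atoms depends only on the endpoints of `u`, provided that
these are distinct. All conditions are first-order. -/
structure IsCoarse : Prop where
  eq_of_mP_left {x a b : M} : mI x → mP x a b → a = b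
  eq_of_mP_right {a y b : M} : mI y → mP a y b → a = b
  endpoints_unique {a x y x' y' : M} :
    mI x → mI y → mI x' → mI y' → goes a x y → goes a x' y' → x = x' ∧ y = y'
  exists_mC (b : M) : ∃ a, mC a b
  goes_of_mC {a b x y : M} : mI x → mI y → mC a b → goes b x y → goes a y x
  mP_of_parallel {a b u v x y : M} : mI x → mI y → x ≠ y → goes u x y → goes v x y →
    ¬ mI a → ¬ mI b → mP a b u → mP a b v

namespace IsCoarse

theorem splitPairs_singleton_subsingleton (hM : IsCoarse M) (a : M) :
    (splitPairs {a}).Subsingleton := by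
  rintro ⟨x, y⟩ ⟨hx, hy, -, _, rfl, -, -, hxy, -⟩ ⟨x', y'⟩ ⟨hx', hy', -, _, rfl, -, -, hxy', -⟩
  exact Prod.ext_iff.2 (hM.endpoints_unique hx hy hx' hy' hxy hxy')

theorem splitPairs_idSet (hM : IsCoarse M) : splitPairs (idSet M) = ∅ := by
  refine Set.eq_empty_of_forall_notMem ?_
  rintro ⟨x, y⟩ ⟨-, -, hxy, a, ha, -, -, ⟨hxa, hay⟩, -⟩
  exact hxy ((hM.eq_of_mP_right ha hxa).trans (hM.eq_of_mP_left ha hay).symm)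

theorem splitPairs_sComp_subset (hM : IsCoarse M) (X Y : Set M) :
    splitPairs (sComp X Y) ⊆ splitPairs X ∪ splitPairs Y := by
  rintro ⟨x, y⟩ ⟨hx, hy, hxy, u, ⟨a, ha, b, hb, hP⟩, v, hv, hu, hv'⟩
  by_cases hIa : mI a
  · obtain rfl : b = u := hM.eq_of_mP_left hIa hP
    obtain rfl : a = x := (hM.endpoints_unique hIa hy hx hy ⟨hP, hu.2⟩ hu).1
    have hvY : v ∉ Y := fun h => hv ⟨a, ha, v, h, hv'.1⟩
    exact Or.inr ⟨hx, hy, hxy, b, hb, v, hvY, hu, hv'⟩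
  by_cases hIb : mI b
  · obtain rfl : a = u := hM.eq_of_mP_right hIb hP
    obtain rfl : b = y := (hM.endpoints_unique hx hIb hx hy ⟨hu.1, hP⟩ hu).2
    have hvX : v ∉ X := fun h => hv ⟨v, h, b, hb, hv'.2⟩
    exact Or.inl ⟨hx, hy, hxy, a, ha, v, hvX, hu, hv'⟩
  exact absurd ⟨a, ha, b, hb, hM.mP_of_parallel hx hy hxy hu hv' hIa hIb hP⟩ hv

theorem splitPairs_sConv_subset (hM : IsCoarse M) (X : Set M) :
    splitPairs (sConv X) ⊆ Prod.swap '' splitPairs X := by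
  rintro ⟨x, y⟩ ⟨hx, hy, hxy, u, ⟨a, ha, hau⟩, v, hv, hu, hv'⟩
  obtain ⟨b, hbv⟩ := hM.exists_mC v
  have hb : b ∉ X := fun h => hv ⟨b, h, hbv⟩
  exact ⟨(y, x), ⟨hy, hx, hxy.symm, a, ha, b, hb, hM.goes_of_mC hx hy hau hu,
    hM.goes_of_mC hx hy hbv hv'⟩, rfl⟩

end IsCoarse

theorem stmt_12_general (hM : IsCoarse M) {X : Set M} (hX : InTA M X) :
    (splitPairs X).Finite := by
  induction hX with
  | sing a => exact (hM.splitPairs_singleton_subsingleton a).finite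
  | idset => exact hM.splitPairs_idSet ▸ Set.finite_empty
  | union _ _ ihX ihY => exact (ihX.union ihY).subset (splitPairs_union_subset _ _)
  | compl _ ih => exact ih.subset (splitPairs_compl_subset _)
  | comp _ _ ihX ihY => exact (ihX.union ihY).subset (hM.splitPairs_sComp_subset _ _)
  | conv _ ih => exact (ih.image Prod.swap).subset (hM.splitPairs_sConv_subset _)

end SplitPairs

section Ultraproduct

open Filter

variable {J : Type} {D : Ultrafilter J} {M : J → Type}

variable (D) in
/-- The element of the ultraproduct represented by the family `f`. Mathlib's coercion unfolds the
type `Filter.Product`, which hides the `atomLang.Structure` instance on it. -/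
def ultraproductMk (f : ∀ j, M j) : (D : Filter J).Product M :=
  Quotient.mk ((D : Filter J).productSetoid M) f

theorem ultraproductMk_eq_iff {f g : ∀ j, M j} :
    ultraproductMk D f = ultraproductMk D g ↔ ∀ᶠ j in D, f j = g j :=
  Quotient.eq (r := (D : Filter J).productSetoid M)

theorem ultraproductMk_surjective : Function.Surjective (ultraproductMk (M := M) D) :=
  Quotient.mk_surjective

variable [∀ j, atomLang.Structure (M j)]

theorem relMap_ultraproductMk_comp {n : ℕ} (R : atomLang.Relations n) (f : Fin n → ∀ j, M j) :
    Structure.RelMap R (ultraproductMk D ∘ f) ↔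
      ∀ᶠ j in D, Structure.RelMap R (Function.eval j ∘ f) :=
  relMap_quotient_mk' (s := (D : Filter J).productSetoid M) R f

theorem mI_ultraproductMk {f : ∀ j, M j} :
    mI (ultraproductMk D f) ↔ ∀ᶠ j in D, mI (f j) := by
  simpa only [mI, Matrix.vecCons, Fin.comp_cons, Matrix.empty_eq]
    using relMap_ultraproductMk_comp (D := D) (AtomRel.I : atomLang.Relations 1) ![f]

theorem mC_ultraproductMk {f g : ∀ j, M j} :
    mC (ultraproductMk D f) (ultraproductMk D g) ↔ ∀ᶠ j in D, mC (f j) (g j) := by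
  simpa only [mC, Matrix.vecCons, Fin.comp_cons, Matrix.empty_eq]
    using relMap_ultraproductMk_comp (D := D) (AtomRel.C : atomLang.Relations 2) ![f, g]

theorem mP_ultraproductMk {f g h : ∀ j, M j} :
    mP (ultraproductMk D f) (ultraproductMk D g) (ultraproductMk D h) ↔
      ∀ᶠ j in D, mP (f j) (g j) (h j) := by
  simpa only [mP, Matrix.vecCons, Fin.comp_cons, Matrix.empty_eq]
    using relMap_ultraproductMk_comp (D := D) (AtomRel.P : atomLang.Relations 3) ![f, g, h]

theorem goes_ultraproductMk {f g h : ∀ j, M j} :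
    goes (ultraproductMk D f) (ultraproductMk D g) (ultraproductMk D h) ↔
      ∀ᶠ j in D, goes (f j) (g j) (h j) := by
  simp only [goes, mP_ultraproductMk, eventually_and]

theorem IsCoarse.ultraproduct (D : Ultrafilter J) (hM : ∀ j, IsCoarse (M j)) :
    IsCoarse ((D : Filter J).Product M) where
  eq_of_mP_left {x a b} := by
    obtain ⟨⟨x, rfl⟩, ⟨a, rfl⟩⟩ := ultraproductMk_surjective x, ultraproductMk_surjective a
    obtain ⟨b, rfl⟩ := ultraproductMk_surjective b
    simp only [mI_ultraproductMk, mP_ultraproductMk, ultraproductMk_eq_iff]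
    intro hx h
    filter_upwards [hx, h] with j using (hM j).eq_of_mP_left
  eq_of_mP_right {a y b} := by
    obtain ⟨⟨a, rfl⟩, ⟨y, rfl⟩⟩ := ultraproductMk_surjective a, ultraproductMk_surjective y
    obtain ⟨b, rfl⟩ := ultraproductMk_surjective b
    simp only [mI_ultraproductMk, mP_ultraproductMk, ultraproductMk_eq_iff]
    intro hy h
    filter_upwards [hy, h] with j using (hM j).eq_of_mP_right
  endpoints_unique {a x y x' y'} := by
    obtain ⟨⟨a, rfl⟩, ⟨x, rfl⟩⟩ := ultraproductMk_surjective a, ultraproductMk_surjective x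
    obtain ⟨⟨y, rfl⟩, ⟨x', rfl⟩⟩ := ultraproductMk_surjective y, ultraproductMk_surjective x'
    obtain ⟨y', rfl⟩ := ultraproductMk_surjective y'
    simp only [mI_ultraproductMk, goes_ultraproductMk, ultraproductMk_eq_iff, ← eventually_and]
    intro hx hy hx' hy' h h'
    filter_upwards [hx, hy, hx', hy', h, h'] with j using (hM j).endpoints_unique
  exists_mC b := by
    obtain ⟨b, rfl⟩ := ultraproductMk_surjective b
    choose a ha using fun j => (hM j).exists_mC (b j)
    exact ⟨a, mC_ultraproductMk.2 (Eventually.of_forall ha)⟩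
  goes_of_mC {a b x y} := by
    obtain ⟨⟨a, rfl⟩, ⟨b, rfl⟩⟩ := ultraproductMk_surjective a, ultraproductMk_surjective b
    obtain ⟨⟨x, rfl⟩, ⟨y, rfl⟩⟩ := ultraproductMk_surjective x, ultraproductMk_surjective y
    simp only [mI_ultraproductMk, mC_ultraproductMk, goes_ultraproductMk]
    intro hx hy hab hb
    filter_upwards [hx, hy, hab, hb] with j using (hM j).goes_of_mC
  mP_of_parallel {a b u v x y} := by
    obtain ⟨⟨a, rfl⟩, ⟨b, rfl⟩⟩ := ultraproductMk_surjective a, ultraproductMk_surjective b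
    obtain ⟨⟨u, rfl⟩, ⟨v, rfl⟩⟩ := ultraproductMk_surjective u, ultraproductMk_surjective v
    obtain ⟨⟨x, rfl⟩, ⟨y, rfl⟩⟩ := ultraproductMk_surjective x, ultraproductMk_surjective y
    simp only [ne_eq, mI_ultraproductMk, mP_ultraproductMk, goes_ultraproductMk,
      ultraproductMk_eq_iff, ← Ultrafilter.eventually_not]
    intro hx hy hxy hu hv ha hb h
    filter_upwards [hx, hy, hxy, hu, hv, ha, hb, h] with j using (hM j).mP_of_parallel

end Ultraproduct

namespace Atom

theorem mI_dom (a : Atom) : mI a.dom := by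
  cases a <;> trivial

theorem dom_of_mI {x : Atom} (hx : mI x) : x.dom = x := by
  cases x <;> first | rfl | exact hx.elim

theorem rg_of_mI {x : Atom} (hx : mI x) : x.rg = x := by
  cases x <;> first | rfl | exact hx.elim

theorem cnv_of_mI {x : Atom} (hx : mI x) : x.cnv = x := by
  cases x <;> first | rfl | exact hx.elim

theorem dom_cnv (a : Atom) : a.cnv.dom = a.rg := by
  cases a <;> rfl

theorem rg_cnv (a : Atom) : a.cnv.rg = a.dom := by
  cases a <;> rfl

theorem cnv_cnv (a : Atom) : a.cnv.cnv = a := by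
  cases a <;> rfl

theorem mC_iff {a b : Atom} : mC a b ↔ b = a.cnv := Iff.rfl

theorem mP_iff {a b c : Atom} : mP a b c ↔ Prel a b c := Iff.rfl

theorem mP_left_iff {x a b : Atom} (hx : mI x) : mP x a b ↔ a.dom = x ∧ b = a := by
  rw [mP_iff]
  refine ⟨?_, fun h => Or.inl ⟨h.1.symm, h.2⟩⟩
  rintro (⟨h, hb⟩ | ⟨rfl, rfl⟩ | ⟨rfl, rfl⟩ | h)
  · exact ⟨h.symm, hb⟩
  · simp only [dom_of_mI, rg_of_mI, hx, and_self]
  · simp only [dom_of_mI, cnv_of_mI, hx, and_self]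
  · exact absurd hx h.1

theorem mP_right_iff {a y b : Atom} (hy : mI y) : mP a y b ↔ a.rg = y ∧ b = a := by
  rw [mP_iff]
  refine ⟨?_, fun h => Or.inr (Or.inl ⟨h.1.symm, h.2⟩)⟩
  rintro (⟨rfl, rfl⟩ | ⟨h, hb⟩ | ⟨hya, rfl⟩ | h)
  · simp only [dom_of_mI, rg_of_mI, hy, and_self]
  · exact ⟨h.symm, hb⟩
  · obtain rfl : a = y := by rw [← cnv_cnv a, ← hya, cnv_of_mI hy]
    exact ⟨rg_of_mI hy, dom_of_mI hy⟩
  · exact absurd hy h.2.1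

theorem goes_iff {a x y : Atom} (hx : mI x) (hy : mI y) :
    goes a x y ↔ a.dom = x ∧ a.rg = y := by
  simp only [goes, mP_left_iff hx, mP_right_iff hy, and_true]

theorem not_mI_of_goes {a x y : Atom} (hx : mI x) (hy : mI y) (hxy : x ≠ y)
    (h : goes a x y) : ¬ mI a := by
  obtain ⟨rfl, rfl⟩ := (goes_iff hx hy).1 h
  exact fun ha => hxy ((dom_of_mI ha).trans (rg_of_mI ha).symm)

theorem mP_iff_of_not_mI {a b c : Atom} (ha : ¬ mI a) (hb : ¬ mI b) (hc : ¬ mI c) :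
    mP a b c ↔ a.dom = c.dom ∧ a.rg = b.dom ∧ b.rg = c.rg := by
  rw [mP_iff]
  refine ⟨?_, fun h => Or.inr (Or.inr (Or.inr ⟨ha, hb, hc, h⟩))⟩
  rintro (⟨rfl, -⟩ | ⟨rfl, -⟩ | ⟨-, rfl⟩ | h)
  · exact absurd (mI_dom b) ha
  · exact absurd (dom_cnv a ▸ mI_dom a.cnv) hb
  · exact absurd (mI_dom a) hc
  · exact h.2.2.2

theorem isCoarse : IsCoarse Atom where
  eq_of_mP_left hx h := ((mP_left_iff hx).1 h).2.symm
  eq_of_mP_right hy h := ((mP_right_iff hy).1 h).2.symm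
  endpoints_unique hx hy hx' hy' h h' := by
    rw [goes_iff hx hy] at h
    rw [goes_iff hx' hy'] at h'
    exact ⟨h.1.symm.trans h'.1, h.2.symm.trans h'.2⟩
  exists_mC b := ⟨b.cnv, mC_iff.2 (cnv_cnv b).symm⟩
  goes_of_mC {a b x y} hx hy hab hb := by
    obtain rfl := mC_iff.1 hab
    rw [goes_iff hx hy, dom_cnv, rg_cnv] at hb
    exact (goes_iff hy hx).2 hb.symm
  mP_of_parallel {a b u v x y} hx hy hxy hu hv ha hb h := by
    have hu' : ¬ mI u := not_mI_of_goes hx hy hxy hu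
    have hv' : ¬ mI v := not_mI_of_goes hx hy hxy hv
    rw [goes_iff hx hy] at hu hv
    rw [mP_iff_of_not_mI ha hb hu', hu.1, hu.2] at h
    rwa [mP_iff_of_not_mI ha hb hv', hv.1, hv.2]

end Atom

/-- Every member of the term algebra of an ultrapower `Z'` of `Z` splits only
finitely many pairs `(x,y)` of distinct elements of `I'`. -/
theorem stmt_12 (J : Type) (D : Ultrafilter J)
    (X : Set (UPow J D)) (hX : InTA (UPow J D) X) :
    {p : UPow J D × UPow J D |
      mI p.1 ∧ mI p.2 ∧ p.1 ≠ p.2 ∧ SplitsG X p.1 p.2}.Finite :=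
  stmt_12_general (IsCoarse.ultraproduct D fun _ => Atom.isCoarse) hX
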